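/- For all integers k ≥ 2 and r, s ≥ 1, one has R_{r+s}(k) − 1 ≥ (R_r(k) − 1) · (R_s(k) − 1). -/

import Mathlib

open Filter Topology
open scoped ENNReal

/-- `N` has the Ramsey property for the tuple `k`: every `r`-coloring of the
edges of the complete graph on `N` vertices admits a color `i` and a set of
`k i` vertices all of whose connecting edges have color `i`. -/
def ramseyProp {r : ℕ} (k : Fin r → ℕ) (N : ℕ) : Prop :=
  ∀ c : Sym2 (Fin N) → Fin r, ∃ i : Fin r, ∃ S : Finset (Fin N),
    S.card = k i ∧ ∀ u ∈ S, ∀ v ∈ S, u ≠ v → c s(u, v) = i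

/-- The multicolor Ramsey number `R(k 0, …, k (r-1))`: the least positive `N`
with the Ramsey property. -/
noncomputable def multiRamsey {r : ℕ} (k : Fin r → ℕ) : ℕ :=
  sInf {N | 0 < N ∧ ramseyProp k N}

/-- The diagonal multicolor Ramsey number `R_r(k)`. -/
noncomputable def diagRamsey (r k : ℕ) : ℕ :=
  multiRamsey (fun _ : Fin r => k)

/-- DC, the "decreasing conjecture". -/
def DC : Prop :=
  ∀ (r : ℕ), 2 ≤ r → ∀ k : Fin r → ℕ, (∀ l, 2 ≤ k l) →
    ∀ i j : Fin r, i ≠ j → 3 ≤ k i → k i ≤ k j →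
      multiRamsey (fun l => if l = i then k i - 1 else if l = j then k j + 1 else k l)
        ≤ multiRamsey k

/-- Finite Ramsey theorem: every large enough finite set contains a monochromatic clique of a
prescribed size. -/
theorem exists_card_forall_monochromatic {α : Type*} {r : ℕ} [NeZero r] (n : ℕ) :
    ∀ k : Fin r → ℕ, ∑ i, k i = n → ∃ N : ℕ, ∀ (c : Sym2 α → Fin r) (V : Finset α), N ≤ V.card →
      ∃ i, ∃ S ⊆ V, S.card = k i ∧ ∀ u ∈ S, ∀ v ∈ S, u ≠ v → c s(u, v) = i := by
  classical
  induction n using Nat.strong_induction_on with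
  | _ n ih =>
    intro k hk
    by_cases hzero : ∃ i, k i = 0
    · obtain ⟨i, hi⟩ := hzero
      exact ⟨0, fun c V _ => ⟨i, ∅, by simp, by simp [hi], by simp⟩⟩
    push Not at hzero
    have hstep : ∀ i, ∃ N : ℕ, ∀ (c : Sym2 α → Fin r) (V : Finset α), N ≤ V.card →
        ∃ j, ∃ S ⊆ V, S.card = Function.update k i (k i - 1) j ∧
          ∀ u ∈ S, ∀ v ∈ S, u ≠ v → c s(u, v) = j := by
      intro i
      refine ih _ ?_ _ rfl
      rw [← hk]
      refine Finset.sum_lt_sum (fun j _ => ?_) ⟨i, Finset.mem_univ i, ?_⟩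
      · by_cases hj : j = i
        · subst hj; simp
        · simp [hj]
      · have := hzero i
        simp only [Function.update_self]
        omega
    choose N hN using hstep
    refine ⟨∑ i, N i + 1, fun c V hV => ?_⟩
    obtain ⟨v, hv⟩ : V.Nonempty := Finset.card_pos.mp (by omega)
    have hcard : ∑ i, N i ≤ ∑ i, ((V.erase v).filter fun w => c s(v, w) = i).card := by
      rw [← Finset.card_eq_sum_card_fiberwise (fun _ _ => Finset.mem_coe.mpr (Finset.mem_univ _)),
        Finset.card_erase_of_mem hv]
      omega
    obtain ⟨i, -, hi⟩ := Finset.exists_le_of_sum_le Finset.univ_nonempty hcard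
    obtain ⟨j, S, hSV, hS, hmono⟩ := hN i c _ hi
    have hsub : S ⊆ V := fun w hw =>
      Finset.mem_of_mem_erase (Finset.mem_filter.mp (hSV hw)).1
    by_cases hj : j = i
    · subst hj
      have hvw : ∀ w ∈ S, c s(v, w) = j := fun w hw => (Finset.mem_filter.mp (hSV hw)).2
      have hvS : v ∉ S := fun h => by simpa using hSV h
      refine ⟨j, insert v S, Finset.insert_subset hv hsub, ?_, ?_⟩
      · have := hzero j
        rw [Finset.card_insert_of_notMem hvS, hS, Function.update_self]
        omega
      · intro u hu w hw huw
        rcases Finset.mem_insert.mp hu with rfl | huS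
        · rcases Finset.mem_insert.mp hw with rfl | hwS
          · exact absurd rfl huw
          · exact hvw w hwS
        · rcases Finset.mem_insert.mp hw with rfl | hwS
          · rw [Sym2.eq_swap]
            exact hvw u huS
          · exact hmono u huS w hwS huw
    · exact ⟨j, S, hsub, by rw [hS, Function.update_of_ne hj], hmono⟩

theorem exists_ramseyProp {r : ℕ} [NeZero r] (k : Fin r → ℕ) : ∃ N, 0 < N ∧ ramseyProp k N := by
  obtain ⟨N, hN⟩ := exists_card_forall_monochromatic (α := ℕ) _ k rfl
  refine ⟨N + 1, N.succ_pos, fun c => ?_⟩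
  obtain ⟨i, S, hSN, hS, hmono⟩ :=
    hN (fun e => c (e.map (Fin.ofNat (N + 1)))) (Finset.range (N + 1)) (by simp)
  have hinj : Set.InjOn (Fin.ofNat (N + 1)) S := fun u hu v hv huv => by
    have hu' := Finset.mem_range.mp (hSN hu)
    have hv' := Finset.mem_range.mp (hSN hv)
    simpa [Fin.ext_iff, Nat.mod_eq_of_lt hu', Nat.mod_eq_of_lt hv'] using huv
  refine ⟨i, S.image (Fin.ofNat (N + 1)), by rw [Finset.card_image_of_injOn hinj, hS], ?_⟩
  simp only [Finset.forall_mem_image]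
  intro u hu v hv huv
  exact hmono u hu v hv (fun h => huv (by rw [h]))

/-- The multicolor Ramsey number has the Ramsey property. -/
theorem ramseyProp_multiRamsey {r : ℕ} [NeZero r] (k : Fin r → ℕ) :
    0 < multiRamsey k ∧ ramseyProp k (multiRamsey k) :=
  Nat.sInf_mem (exists_ramseyProp k)

/-- Lexicographic product of colorings: good colorings on `a` and `b` vertices with disjoint
palettes yield a good coloring on any `M ≤ a * b` vertices. -/
theorem ramseyProp_or_ramseyProp_of_append {r s a b M : ℕ} {k : Fin r → ℕ} {l : Fin s → ℕ}
    (hM : M ≤ a * b) (h : ramseyProp (Fin.append k l) M) : ramseyProp k a ∨ ramseyProp l b := by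
  classical
  by_contra! hcon
  obtain ⟨ha, hb⟩ := hcon
  simp only [ramseyProp, not_forall] at ha hb
  obtain ⟨c, hc⟩ := ha
  obtain ⟨d, hd⟩ := hb
  let f : Fin M → Fin a × Fin b := fun x => finProdFinEquiv.symm (Fin.castLE hM x)
  have hf : Function.Injective f :=
    finProdFinEquiv.symm.injective.comp (Fin.castLE_injective hM)
  let color : Sym2 (Fin M) → Fin (r + s) := fun e =>
    if (e.map fun x => (f x).1).IsDiag then Fin.natAdd r (d (e.map fun x => (f x).2))
    else Fin.castAdd s (c (e.map fun x => (f x).1))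
  have color_of_eq : ∀ u v, (f u).1 = (f v).1 →
      color s(u, v) = Fin.natAdd r (d s((f u).2, (f v).2)) := fun u v huv => by
    simp [color, huv]
  have color_of_ne : ∀ u v, (f u).1 ≠ (f v).1 →
      color s(u, v) = Fin.castAdd s (c s((f u).1, (f v).1)) := fun u v huv => by
    simp [color, huv]
  obtain ⟨i, S, hS, hmono⟩ := h color
  induction i using Fin.addCases with
  | left i =>
    have hne : ∀ u ∈ S, ∀ v ∈ S, u ≠ v → (f u).1 ≠ (f v).1 := fun u hu v hv huv heq => by
      have := hmono u hu v hv huv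
      rw [color_of_eq u v heq] at this
      simp [Fin.ext_iff] at this
      omega
    refine hc ⟨i, S.image fun x => (f x).1, ?_, ?_⟩
    · rw [Finset.card_image_of_injOn fun u hu v hv huv => by_contra fun h => hne u hu v hv h huv,
        hS, Fin.append_left]
    · simp only [Finset.forall_mem_image]
      intro u hu v hv huv
      have := hmono u hu v hv (fun h => huv (by rw [h]))
      rw [color_of_ne u v huv] at this
      exact Fin.castAdd_injective _ _ this
  | right i =>
    have heq : ∀ u ∈ S, ∀ v ∈ S, (f u).1 = (f v).1 := fun u hu v hv => by
      by_contra hne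
      have := hmono u hu v hv (fun h => hne (by rw [h]))
      rw [color_of_ne u v hne] at this
      simp [Fin.ext_iff] at this
      omega
    refine hd ⟨i, S.image fun x => (f x).2, ?_, ?_⟩
    · rw [Finset.card_image_of_injOn fun u hu v hv huv => hf (Prod.ext (heq u hu v hv) huv),
        hS, Fin.append_right]
    · simp only [Finset.forall_mem_image]
      intro u hu v hv huv
      have := hmono u hu v hv (fun h => huv (by rw [h]))
      rw [color_of_eq u v (heq u hu v hv)] at this
      exact Fin.natAdd_injective _ _ this

theorem not_ramseyProp_of_lt_multiRamsey {r N : ℕ} {k : Fin r → ℕ} (hpos : 0 < N)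
    (hN : N < multiRamsey k) : ¬ ramseyProp k N :=
  fun h => Nat.notMem_of_lt_sInf hN ⟨hpos, h⟩

/-- `R_{r+s}(k) − 1 ≥ (R_r(k) − 1) · (R_s(k) − 1)`. -/
theorem stmt1 (k r s : ℕ) (hk : 2 ≤ k) (hr : 1 ≤ r) (hs : 1 ≤ s) :
    (diagRamsey r k - 1) * (diagRamsey s k - 1) ≤ diagRamsey (r + s) k - 1 := by
  have : NeZero (r + s) := ⟨by omega⟩
  obtain ⟨hpos, hprop⟩ := ramseyProp_multiRamsey (fun _ : Fin (r + s) => k)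
  by_contra! hlt
  have hle : diagRamsey (r + s) k ≤ (diagRamsey r k - 1) * (diagRamsey s k - 1) := by omega
  have hprod : 0 < (diagRamsey r k - 1) * (diagRamsey s k - 1) := by omega
  have ha := Nat.pos_of_mul_pos_right hprod
  have hb := Nat.pos_of_mul_pos_left hprod
  have happend : (fun _ : Fin (r + s) => k) = Fin.append (fun _ : Fin r => k) fun _ : Fin s => k := by
    ext i
    induction i using Fin.addCases <;> simp
  have hprop' : ramseyProp (Fin.append (fun _ : Fin r => k) fun _ : Fin s => k)
      (diagRamsey (r + s) k) := happend ▸ hprop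
  rcases ramseyProp_or_ramseyProp_of_append hle hprop' with h | h
  · exact not_ramseyProp_of_lt_multiRamsey ha (Nat.sub_lt (by omega) one_pos) h
  · exact not_ramseyProp_of_lt_multiRamsey hb (Nat.sub_lt (by omega) one_pos) h
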